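/- For β in (0, π/4] and α in (β, π/2), we have cos²(β)/cos²(α) + (β·tan(β))/(α·tan(α))·sin²(α) ≥ 1 + sin²(α). -/

import Mathlib

open Real

/-!
For fixed `α`, clearing denominators turns the inequality into `ψ α ≤ ψ β`, where
`ψ x = (sin α ^ 4 - sin x ^ 2) / (x * tan x)`. The function `ψ` decreases on `(0, α]`: as
`sin x ^ 4 ≤ sin α ^ 4` there, its derivative is at most a negative multiple of
`x - sin x * cos x ≥ 0`.
-/

lemma abs_sin_mul_cos_le_abs (x : ℝ) : |sin x * cos x| ≤ |x| := by
  have h : |2 * (sin x * cos x)| ≤ |2 * x| := by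
    simpa only [sin_two_mul, mul_assoc] using abs_sin_le_abs (x := 2 * x)
  rwa [abs_mul 2, abs_mul 2 x, mul_le_mul_iff_right₀ (by norm_num)] at h

lemma hasDerivAt_sub_sin_sq_div_mul_tan (c : ℝ) {x : ℝ} (hsin : sin x ≠ 0) (hcos : cos x ≠ 0) :
    HasDerivAt (fun y ↦ (c - sin y ^ 2) / (y * tan y))
      (-(2 * x * sin x ^ 2 * cos x ^ 2 + (c - sin x ^ 2) * (sin x * cos x + x)) /
        (x * sin x) ^ 2) x := by
  have hx : x ≠ 0 := by
    rintro rfl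
    exact hsin sin_zero
  have htan : tan x ≠ 0 := by
    rw [tan_eq_sin_div_cos]
    exact div_ne_zero hsin hcos
  have hnum : HasDerivAt (fun y ↦ c - sin y ^ 2) (-(2 * sin x * cos x)) x := by
    simpa using ((hasDerivAt_sin x).fun_pow 2).const_sub c
  have hden := (hasDerivAt_id' x).fun_mul (hasDerivAt_tan hcos)
  refine (hnum.fun_div hden (mul_ne_zero hx htan)).congr_deriv ?_
  rw [tan_eq_sin_div_cos]
  field_simp
  ring

lemma add_sub_sin_sq_mul_nonneg {c x : ℝ} (hx : 0 ≤ x) (hc : sin x ^ 4 ≤ c) :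
    0 ≤ 2 * x * sin x ^ 2 * cos x ^ 2 + (c - sin x ^ 2) * (sin x * cos x + x) := by
  obtain ⟨hlower, hupper⟩ := abs_le.1 ((abs_sin_mul_cos_le_abs x).trans_eq (abs_of_nonneg hx))
  have hsq : -(sin x ^ 2 * cos x ^ 2) ≤ c - sin x ^ 2 := by
    rw [cos_sq']
    linarith
  calc
    0 ≤ sin x ^ 2 * cos x ^ 2 * (x - sin x * cos x) :=
      mul_nonneg (by positivity) (sub_nonneg.2 hupper)
    _ = 2 * x * sin x ^ 2 * cos x ^ 2 +
        -(sin x ^ 2 * cos x ^ 2) * (sin x * cos x + x) := by ring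
    _ ≤ 2 * x * sin x ^ 2 * cos x ^ 2 + (c - sin x ^ 2) * (sin x * cos x + x) := by
      gcongr
      linarith

lemma antitoneOn_sub_sin_sq_div_mul_tan {a c : ℝ} (ha : a < π / 2) (hc : sin a ^ 4 ≤ c) :
    AntitoneOn (fun x ↦ (c - sin x ^ 2) / (x * tan x)) (Set.Ioc 0 a) := by
  have hsin : ∀ x ∈ Set.Ioc 0 a, 0 < sin x := fun x hx ↦
    sin_pos_of_pos_of_lt_pi hx.1 (by linarith [hx.2, pi_pos])
  have hderiv : ∀ x ∈ Set.Ioc 0 a, HasDerivAt (fun y ↦ (c - sin y ^ 2) / (y * tan y)) _ x :=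
    fun x hx ↦ hasDerivAt_sub_sin_sq_div_mul_tan c (hsin x hx).ne'
      (cos_pos_of_mem_Ioo ⟨by linarith [hx.1, pi_pos], hx.2.trans_lt ha⟩).ne'
  refine antitoneOn_of_hasDerivWithinAt_nonpos (convex_Ioc 0 a)
    (fun x hx ↦ (hderiv x hx).continuousAt.continuousWithinAt)
    (fun x hx ↦ (hderiv x (interior_subset hx)).hasDerivWithinAt) fun x hx ↦ ?_
  have hx' : x ∈ Set.Ioc 0 a := interior_subset hx
  have hsin_le : sin x ≤ sin a :=
    sin_le_sin_of_le_of_le_pi_div_two (by linarith [hx'.1, pi_pos]) ha.le hx'.2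
  have hpow : sin x ^ 4 ≤ c := (pow_le_pow_left₀ (hsin x hx').le hsin_le 4).trans hc
  exact div_nonpos_of_nonpos_of_nonneg
    (neg_nonpos.2 (add_sub_sin_sq_mul_nonneg hx'.1.le hpow)) (sq_nonneg _)

lemma sin_sq_le_sin_pow_four_add {α β : ℝ} (hβ : 0 < β) (hβα : β ≤ α) (hα : α < π / 2) :
    sin β ^ 2 ≤
      sin α ^ 4 + β * tan β / (α * tan α) * (sin α ^ 2 * cos α ^ 2) := by
  have hanti : (sin α ^ 4 - sin α ^ 2) / (α * tan α) ≤ (sin α ^ 4 - sin β ^ 2) / (β * tan β) :=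
    antitoneOn_sub_sin_sq_div_mul_tan hα le_rfl ⟨hβ, hβα⟩ ⟨hβ.trans_le hβα, le_rfl⟩ hβα
  have hpos : 0 < β * tan β :=
    mul_pos hβ (tan_pos_of_pos_of_lt_pi_div_two hβ (hβα.trans_lt hα))
  rw [le_div_iff₀ hpos] at hanti
  have hcross : (sin α ^ 4 - sin α ^ 2) / (α * tan α) * (β * tan β) =
      -(β * tan β / (α * tan α) * (sin α ^ 2 * cos α ^ 2)) := by
    rw [cos_sq']
    ring
  linarith

theorem stmt_3_general {α β : ℝ} (hβ : 0 < β) (hβα : β ≤ α) (hα : α < π / 2) :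
    1 + sin α ^ 2 ≤
      cos β ^ 2 / cos α ^ 2 + β * tan β / (α * tan α) * sin α ^ 2 := by
  have hcos : 0 < cos α := cos_pos_of_mem_Ioo ⟨by linarith, hα⟩
  calc
    1 + sin α ^ 2 = (1 - sin α ^ 4) / cos α ^ 2 := by
      rw [eq_div_iff (by positivity), cos_sq']
      ring
    _ ≤ (cos β ^ 2 + β * tan β / (α * tan α) * (sin α ^ 2 * cos α ^ 2)) / cos α ^ 2 := by
      gcongr
      linarith [sin_sq_le_sin_pow_four_add hβ hβα hα, cos_sq' β]
    _ = cos β ^ 2 / cos α ^ 2 + β * tan β / (α * tan α) * sin α ^ 2 := by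
      rw [add_div, ← mul_assoc, mul_div_cancel_right₀ _ (by positivity)]

theorem stmt_3 (β α : ℝ) (hβ0 : 0 < β) (hβ : β ≤ π / 4) (hβα : β < α) (hα : α < π / 2) :
    Real.cos β ^ 2 / Real.cos α ^ 2 +
        (β * Real.tan β) / (α * Real.tan α) * Real.sin α ^ 2 ≥
      1 + Real.sin α ^ 2 :=
  stmt_3_general hβ0 hβα.le hα
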